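/- Let a₁, …, aₙ be vertices of a convex polygon, d₁ > d₂ > ⋯ its decreasing list of distinct pairwise distances, and m_i the number of unordered vertex pairs at distance d_i. Then for every k ≥ 1, m₁ + m₂ + ⋯ + m_k ≤ (2k − 1)·n. -/

import Mathlib

/-- The cross product (signed area determinant) of two vectors in the Euclidean plane. -/
noncomputable def cross2 (u v : EuclideanSpace ℝ (Fin 2)) : ℝ := u 0 * v 1 - u 1 * v 0

/-- The vertices `P 0, P 1, …` form a convex polygon listed in clockwise order. -/
def ClockwiseConvexPos {n : ℕ} (P : Fin n → EuclideanSpace ℝ (Fin 2)) : Prop :=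
  ∀ i j k : Fin n, i < j → j < k → cross2 (P j - P i) (P k - P i) < 0

/-!
Index the vertices `a_j` by integers modulo `n`. Starting from a chord among the `k` longest
distances and repeatedly moving one endpoint inwards so that the length increases, one gets stuck
in fewer than `k` moves. At a stuck chord both angles towards the vertices it cuts off are acute, so
the sides of any convex quadrilateral erected over it on that side converge.

If two chords `{a_x, a_y}` and `{a_x', a_y'}` with `x + y = x' + y'` and
`x' - x ≥ 2k - 1` were both among the `k` longest distances, moving the first one inwards and the
second one outwards would leave two disjoint stuck chords facing each other. They are opposite
sides of a convex quadrilateral whose other two sides would have to converge in both directions.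
Hence each of the `n` classes `x + y = ρ (mod n)` contains at most `2k - 1` such chords.
-/

open scoped Finset RealInnerProductSpace

lemma cross2_swap (u v : EuclideanSpace ℝ (Fin 2)) : cross2 u v = -cross2 v u := by
  simp only [cross2]
  ring

lemma cross2_self (u : EuclideanSpace ℝ (Fin 2)) : cross2 u u = 0 := by
  simp only [cross2]
  ring

lemma cross2_sub_rotate (A B C : EuclideanSpace ℝ (Fin 2)) :
    cross2 (B - A) (C - A) = cross2 (C - B) (A - B) := by
  simp only [cross2, PiLp.sub_apply]
  ring

lemma cross2_mul_norm_sq (u v w : EuclideanSpace ℝ (Fin 2)) :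
    cross2 u v * ‖w‖ ^ 2 = ⟪w, u⟫ * cross2 w v - ⟪w, v⟫ * cross2 w u := by
  simp only [cross2, EuclideanSpace.real_norm_sq_eq, PiLp.inner_apply, Fin.sum_univ_two,
    RCLike.inner_apply, conj_trivial]
  ring

lemma inner_pos_of_norm_sub_le {E : Type*} [NormedAddCommGroup E] [InnerProductSpace ℝ E]
    {u w : E} (hu : u ≠ 0) (h : ‖w - u‖ ≤ ‖w‖) : 0 < ⟪w, u⟫ := by
  have hsq : ‖w - u‖ ^ 2 ≤ ‖w‖ ^ 2 := by gcongr
  rw [norm_sub_sq_real] at hsq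
  have : 0 < ‖u‖ ^ 2 := by positivity
  linarith

/-- The sign conditions say, for either orientation of `u` and `w`, that `v` lies in the angular
sector from `u` (included) to `w` (excluded). -/
lemma inner_pos_of_mem_sector {u v w : EuclideanSpace ℝ (Fin 2)}
    (hvw : 0 < cross2 w u * cross2 w v) (huv : 0 ≤ cross2 u v * cross2 u w)
    (h : ‖w - u‖ ≤ ‖w‖) : 0 < ⟪w, v⟫ := by
  have hwu : cross2 w u ≠ 0 := left_ne_zero_of_mul hvw.ne'
  have hu : u ≠ 0 := by
    rintro rfl
    simp [cross2] at hwu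
  have key : ⟪w, v⟫ * cross2 w u ^ 2
      = ⟪w, u⟫ * (cross2 w u * cross2 w v) + cross2 u v * cross2 u w * ‖w‖ ^ 2 := by
    rw [cross2_swap u w]
    linear_combination cross2 w u * cross2_mul_norm_sq u v w
  have hpos : 0 < ⟪w, v⟫ * cross2 w u ^ 2 := by
    rw [key]
    have := inner_pos_of_norm_sub_le hu h
    positivity
  exact pos_of_mul_pos_left hpos (sq_nonneg _)

lemma cross2_pos_of_acute_base {A B C D : EuclideanSpace ℝ (Fin 2)}
    (hB : cross2 (B - A) (D - A) < 0) (hC : cross2 (C - A) (D - A) < 0)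
    (hA : 0 < ⟪D - A, B - A⟫) (hD : 0 < ⟪A - D, C - D⟫) :
    0 < cross2 (B - A) (C - D) := by
  have hDC : ⟪D - A, C - D⟫ < 0 := by
    rwa [← neg_sub D A, inner_neg_left, neg_pos] at hD
  have hC' : 0 < cross2 (D - A) (C - D) := by
    simp only [cross2, PiLp.sub_apply] at hC ⊢
    linarith
  have hB' : 0 < cross2 (D - A) (B - A) := by
    rw [cross2_swap]
    exact neg_pos.2 hB
  have key := cross2_mul_norm_sq (B - A) (C - D) (D - A)
  have hpos : 0 < cross2 (B - A) (C - D) * ‖D - A‖ ^ 2 := by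
    rw [key]
    linarith [mul_pos hA hC', mul_neg_of_neg_of_pos hDC hB']
  exact pos_of_mul_pos_left hpos (sq_nonneg _)

/-- A walk that keeps increasing `f` visits distinct members of `D`, so it has fewer than `#D`
steps. -/
lemma exists_stuck_of_upward_closed {α : Type*} [LinearOrder α] (f : ℤ → ℤ → α) (D : Finset α)
    (hD : ∀ c ∈ D, ∀ a b, c ≤ f a b → f a b ∈ D) {x y : ℤ} (hxy : f x y ∈ D) :
    ∃ a b, x ≤ a ∧ b ≤ y ∧ (a - x) + (y - b) < #D ∧
      f (a + 1) b ≤ f a b ∧ f a (b - 1) ≤ f a b := by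
  induction D using Finset.strongInduction generalizing x y with
  | H D ih =>
    have walk_on : ∀ x' y', f x y < f x' y' → x ≤ x' → y' ≤ y → (x' - x) + (y - y') = 1 →
        ∃ a b, x ≤ a ∧ b ≤ y ∧ (a - x) + (y - b) < #D ∧
          f (a + 1) b ≤ f a b ∧ f a (b - 1) ≤ f a b := by
      intro x' y' hlt hx hy hstep
      have hss : D.filter (f x y < ·) ⊂ D :=
        Finset.filter_ssubset.2 ⟨f x y, hxy, lt_irrefl _⟩
      obtain ⟨a, b, ha, hb, hab, hstuck⟩ := ih _ hss
        (fun c hc a b hcab => by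
          rw [Finset.mem_filter] at hc ⊢
          exact ⟨hD c hc.1 a b hcab, hc.2.trans_le hcab⟩)
        (Finset.mem_filter.2 ⟨hD _ hxy _ _ hlt.le, hlt⟩)
      have := Finset.card_lt_card hss
      exact ⟨a, b, hx.trans ha, hb.trans hy, by omega, hstuck⟩
    rcases lt_or_ge (f x y) (f (x + 1) y) with h₁ | h₁
    · exact walk_on _ _ h₁ (by omega) le_rfl (by omega)
    rcases lt_or_ge (f x y) (f x (y - 1)) with h₂ | h₂
    · exact walk_on _ _ h₂ le_rfl (by omega) (by omega)
    have := Finset.card_pos.2 ⟨_, hxy⟩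
    exact ⟨x, y, le_rfl, le_rfl, by omega, h₁, h₂⟩

lemma mem_image_Icc_of_le {α : Type*} [LinearOrder α] {d : ℕ → α} {m N k : ℕ}
    (hd : StrictAntiOn d (Set.Icc m N)) (hkN : k ≤ N) {c r : α}
    (hc : c ∈ (Finset.Icc m k).image d) (hr : r ∈ d '' Set.Icc m N) (hcr : c ≤ r) :
    r ∈ (Finset.Icc m k).image d := by
  obtain ⟨i, hi, rfl⟩ := Finset.mem_image.1 hc
  obtain ⟨j, hj, rfl⟩ := hr
  obtain ⟨hmi, hik⟩ := Finset.mem_Icc.1 hi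
  have hji : j ≤ i := (hd.le_iff_ge ⟨hmi, hik.trans hkN⟩ hj).1 hcr
  exact Finset.mem_image_of_mem d (Finset.mem_Icc.2 ⟨hj.1, hji.trans hik⟩)

lemma card_le_of_forall_sub_lt {s : Finset ℤ} {m : ℕ} (h : ∀ x ∈ s, ∀ y ∈ s, y - x < m) :
    #s ≤ m := by
  rcases s.eq_empty_or_nonempty with rfl | hs
  · simp
  have hsub : s ⊆ Finset.Ico (s.min' hs) (s.min' hs + m) := fun y hy =>
    Finset.mem_Ico.2 ⟨s.min'_le y hy, by linarith [h _ (s.min'_mem hs) y hy]⟩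
  simpa using Finset.card_le_card hsub

/-- A clockwise convex `n`-gon as an `n`-periodic sequence of vertices indexed by `ℤ`, so that
indices can be moved around the polygon without wrapping. Every `n` consecutive indices run once
around the polygon. -/
structure IsConvexCycle (n : ℕ) (Q : ℤ → EuclideanSpace ℝ (Fin 2)) : Prop where
  periodic : Function.Periodic Q n
  cross2_neg : ∀ ⦃x y z : ℤ⦄, x < y → y < z → z < x + n → cross2 (Q y - Q x) (Q z - Q x) < 0

namespace IsConvexCycle

variable {n : ℕ} {Q : ℤ → EuclideanSpace ℝ (Fin 2)}

lemma cross2_pos (hQ : IsConvexCycle n Q) {x y z : ℤ} (hxy : x < y) (hyz : y < z)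
    (hzx : z < x + n) : 0 < cross2 (Q y - Q z) (Q x - Q z) := by
  have := hQ.cross2_neg (x := z) (y := x + n) (z := y + n) (by omega) (by omega) (by omega)
  rw [hQ.periodic, hQ.periodic, cross2_swap] at this
  linarith

lemma acute_left (hQ : IsConvexCycle n Q) {a b c : ℤ} (hac : a < c) (hcb : c < b)
    (hba : b < a + n) (h : dist (Q (a + 1)) (Q b) ≤ dist (Q a) (Q b)) :
    0 < ⟪Q b - Q a, Q c - Q a⟫ := by
  have hub := hQ.cross2_neg (x := a) (y := a + 1) (z := b) (by omega) (by omega) hba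
  have hcb' := hQ.cross2_neg hac hcb hba
  have huc : cross2 (Q (a + 1) - Q a) (Q c - Q a) ≤ 0 := by
    rcases (show a + 1 ≤ c by omega).eq_or_lt with rfl | hlt
    · rw [cross2_self]
    · exact (hQ.cross2_neg (by omega) hlt (by omega)).le
  refine inner_pos_of_mem_sector (u := Q (a + 1) - Q a) ?_
    (mul_nonneg_of_nonpos_of_nonpos huc hub.le) ?_
  · rw [cross2_swap (Q b - Q a), cross2_swap (Q b - Q a), neg_mul_neg]
    exact mul_pos_of_neg_of_neg hub hcb'
  · rwa [sub_sub_sub_cancel_right, ← dist_eq_norm, ← dist_eq_norm, dist_comm (Q b),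
      dist_comm (Q b)]

lemma acute_right (hQ : IsConvexCycle n Q) {a b c : ℤ} (hac : a < c) (hcb : c < b)
    (hba : b < a + n) (h : dist (Q a) (Q (b - 1)) ≤ dist (Q a) (Q b)) :
    0 < ⟪Q a - Q b, Q c - Q b⟫ := by
  have hua := hQ.cross2_pos (x := a) (y := b - 1) (z := b) (by omega) (by omega) hba
  have hca := hQ.cross2_pos hac hcb hba
  have huc : 0 ≤ cross2 (Q (b - 1) - Q b) (Q c - Q b) := by
    rcases (show c ≤ b - 1 by omega).eq_or_lt with rfl | hlt
    · rw [cross2_self]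
    · exact (hQ.cross2_pos hlt (by omega) (by omega)).le
  refine inner_pos_of_mem_sector (u := Q (b - 1) - Q b) ?_ (mul_nonneg huc hua.le) ?_
  · rw [cross2_swap (Q a - Q b), cross2_swap (Q a - Q b), neg_mul_neg]
    exact mul_pos hua hca
  · rwa [sub_sub_sub_cancel_right, ← dist_eq_norm, ← dist_eq_norm]

variable {D : Finset ℝ}

lemma exists_convergent_sides (hQ : IsConvexCycle n Q)
    (hD : ∀ c ∈ D, ∀ x y, c ≤ dist (Q x) (Q y) → dist (Q x) (Q y) ∈ D)
    {x y : ℤ} (hyx : y < x + n) (hxy : dist (Q x) (Q y) ∈ D) :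
    ∃ a b, x ≤ a ∧ b ≤ y ∧ (a - x) + (y - b) < #D ∧
      ∀ p q, a < p → p < q → q < b → 0 < cross2 (Q p - Q a) (Q q - Q b) := by
  obtain ⟨a, b, hxa, hby, hab, hleft, hright⟩ :=
    exists_stuck_of_upward_closed (fun x y => dist (Q x) (Q y)) D hD hxy
  refine ⟨a, b, hxa, hby, hab, fun p q hap hpq hqb => cross2_pos_of_acute_base ?_ ?_ ?_ ?_⟩
  · exact hQ.cross2_neg hap (hpq.trans hqb) (by omega)
  · exact hQ.cross2_neg (hap.trans hpq) hqb (by omega)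
  · exact hQ.acute_left hap (hpq.trans hqb) (by omega) hleft
  · exact hQ.acute_right (hap.trans hpq) hqb (by omega) hright

lemma sub_lt_of_add_eq_add (hQ : IsConvexCycle n Q)
    (hD : ∀ c ∈ D, ∀ x y, c ≤ dist (Q x) (Q y) → dist (Q x) (Q y) ∈ D)
    {x y x' y' : ℤ} (hyx : y < x + n) (hxy' : x' < y') (hsum : x + y = x' + y')
    (hxy : dist (Q x) (Q y) ∈ D) (hx'y' : dist (Q x') (Q y') ∈ D) :
    x' - x < 2 * #D - 1 := by
  by_contra! hgap
  obtain ⟨a, b, hxa, hby, hab, hinner⟩ := hQ.exists_convergent_sides hD hyx hxy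
  -- Moving `{x', y'}` outwards is moving `{y', x' + n}` inwards.
  have hyx' : dist (Q y') (Q (x' + n)) ∈ D := by rwa [hQ.periodic, dist_comm]
  obtain ⟨b', a', hyb', hax', hab', houter⟩ :=
    hQ.exists_convergent_sides hD (by omega) hyx'
  have h₁ := hinner (a' - n) b' (by omega) (by omega) (by omega)
  have h₂ := houter b (a + n) (by omega) (by omega) (by omega)
  rw [hQ.periodic.sub_eq] at h₁
  rw [hQ.periodic] at h₂
  have : cross2 (Q b - Q b') (Q a - Q a') = -cross2 (Q a' - Q a) (Q b' - Q b) := by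
    simp only [cross2, PiLp.sub_apply]
    ring
  linarith

lemma card_level_le (hQ : IsConvexCycle n Q)
    (hD : ∀ c ∈ D, ∀ x y, c ≤ dist (Q x) (Q y) → dist (Q x) (Q y) ∈ D) {ρ : ℤ}
    {S : Finset (ℤ × ℤ)} (hρ : ∀ p ∈ S, p.1 + p.2 = ρ)
    (hS : ∀ p ∈ S, p.1 < p.2 ∧ p.2 < p.1 + n ∧ dist (Q p.1) (Q p.2) ∈ D) :
    #S ≤ 2 * #D - 1 := by
  have hinj : Set.InjOn Prod.fst (S : Set (ℤ × ℤ)) := fun p hp q hq hpq =>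
    Prod.ext hpq (by linarith [hρ p hp, hρ q hq])
  rw [← Finset.card_image_of_injOn hinj]
  refine card_le_of_forall_sub_lt (Finset.forall_mem_image.2 fun p hp =>
    Finset.forall_mem_image.2 fun q hq => ?_)
  obtain ⟨-, hp₂, hpD⟩ := hS p hp
  obtain ⟨hq₁, -, hqD⟩ := hS q hq
  have := hQ.sub_lt_of_add_eq_add hD hp₂ hq₁ ((hρ p hp).trans (hρ q hq).symm) hpD hqD
  omega

lemma card_chords_le (hQ : IsConvexCycle n Q)
    (hD : ∀ c ∈ D, ∀ x y, c ≤ dist (Q x) (Q y) → dist (Q x) (Q y) ∈ D)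
    {S : Finset (ℤ × ℤ)} (hsum : ∀ p ∈ S, p.1 + p.2 ∈ Finset.Ico (0 : ℤ) n)
    (hS : ∀ p ∈ S, p.1 < p.2 ∧ p.2 < p.1 + n ∧ dist (Q p.1) (Q p.2) ∈ D) :
    #S ≤ (2 * #D - 1) * n := by
  have hlevel : ∀ ρ ∈ Finset.Ico (0 : ℤ) n, #{p ∈ S | p.1 + p.2 = ρ} ≤ 2 * #D - 1 :=
    fun ρ _ => hQ.card_level_le hD (fun p hp => (Finset.mem_filter.1 hp).2)
      fun p hp => hS p (Finset.mem_filter.1 hp).1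
  simpa using Finset.card_le_mul_card_image_of_maps_to hsum _ hlevel

end IsConvexCycle

section ChordLift

variable {n : ℕ}

/-- Every chord of an `n`-gon has exactly one representative `(x, y)` with `x < y < x + n` and
`0 ≤ x + y < n`, since exchanging its endpoints, `(x, y) ↦ (y, x + n)`, adds `n` to `x + y`. For
`p.1 < p.2`, this is the representative of the chord joining the vertices `p.1` and `p.2`. -/
def chordLift (p : Fin n × Fin n) : ℤ × ℤ :=
  if (p.1 + p.2 : ℤ) < n then (p.1, p.2) else (p.2 - n, p.1)

lemma chordLift_bounds {p : Fin n × Fin n} (hp : p.1 < p.2) :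
    (chordLift p).1 + (chordLift p).2 ∈ Finset.Ico (0 : ℤ) n ∧
      (chordLift p).1 < (chordLift p).2 ∧ (chordLift p).2 < (chordLift p).1 + n := by
  rw [Finset.mem_Ico, chordLift]
  split_ifs <;> dsimp only <;> omega

lemma chordLift_injective : Function.Injective (chordLift (n := n)) := by
  rintro ⟨i, j⟩ ⟨i', j'⟩ h
  simp only [chordLift] at h
  split_ifs at h <;> simp only [Prod.mk.injEq] at h ⊢ <;> omega

end ChordLift

section PeriodicExtension

variable {n : ℕ} [NeZero n]

/-- The `n`-periodic sequence indexed by `ℤ` that extends a sequence indexed by `Fin n`. -/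
def periodicExtension {α : Type*} (P : Fin n → α) (z : ℤ) : α :=
  P (Fin.ofNat n (z % n).toNat)

lemma periodicExtension_periodic {α : Type*} (P : Fin n → α) :
    Function.Periodic (periodicExtension P) n := fun z => by
  simp only [periodicExtension, Int.add_emod_right]

lemma periodicExtension_coe {α : Type*} (P : Fin n → α) (i : Fin n) :
    periodicExtension P i = P i := by
  have hi : ((i : ℤ) % n).toNat = i := by
    rw [Int.emod_eq_of_lt (by omega) (by omega), Int.toNat_natCast]
  rw [periodicExtension, hi, Fin.ofNat_val_eq_self]

namespace ClockwiseConvexPos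

variable {P : Fin n → EuclideanSpace ℝ (Fin 2)}

lemma cross2_periodicExtension_neg (hP : ClockwiseConvexPos P) {x y z : ℤ} (hx : 0 ≤ x)
    (hxy : x < y) (hyz : y < z) (hzn : z < n) :
    cross2 (periodicExtension P y - periodicExtension P x)
      (periodicExtension P z - periodicExtension P x) < 0 := by
  have lift_to_fin : ∀ w : ℤ, 0 ≤ w → w < n → ∃ i : Fin n, (i : ℤ) = w := fun w h₀ h₁ =>
    ⟨⟨w.toNat, by omega⟩, Int.toNat_of_nonneg h₀⟩
  obtain ⟨i, rfl⟩ := lift_to_fin x hx (by omega)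
  obtain ⟨j, rfl⟩ := lift_to_fin y (by omega) (by omega)
  obtain ⟨k, rfl⟩ := lift_to_fin z (by omega) hzn
  simp only [periodicExtension_coe]
  exact hP i j k (by omega) (by omega)

lemma isConvexCycle_periodicExtension (hP : ClockwiseConvexPos P) :
    IsConvexCycle n (periodicExtension P) := by
  set Q := periodicExtension P
  have hper : Function.Periodic Q n := periodicExtension_periodic P
  have hbase : ∀ x y z : ℤ, 0 ≤ x → x < n → x < y → y < z → z < x + n →
      cross2 (Q y - Q x) (Q z - Q x) < 0 := by
    intro x y z hx hxn hxy hyz hzx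
    rcases lt_or_ge z n with hz | hz
    · exact hP.cross2_periodicExtension_neg hx hxy hyz hz
    rcases lt_or_ge y n with hy | hy
    · rw [← hper.sub_eq z, ← cross2_sub_rotate]
      exact hP.cross2_periodicExtension_neg (by omega) (by omega) hxy hy
    · rw [← hper.sub_eq y, ← hper.sub_eq z, cross2_sub_rotate]
      exact hP.cross2_periodicExtension_neg (by omega) (by omega) (by omega) hxn
  refine ⟨hper, fun x y z hxy hyz hzx => ?_⟩
  have hn : (0 : ℤ) < n := mod_cast NeZero.pos n
  have hdiv := Int.emod_add_ediv_mul x n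
  have := Int.emod_nonneg x hn.ne'
  have := Int.emod_lt_of_pos x hn
  have hbase' := hbase (x - x / n * n) (y - x / n * n) (z - x / n * n) (by omega) (by omega)
    (by omega) (by omega) (by omega)
  have hshift : ∀ w, Q (w - x / n * n) = Q w := fun w => by
    simpa only [Int.cast_id] using hper.sub_int_mul_eq (x := w) (x / n)
  simpa only [hshift] using hbase'

end ClockwiseConvexPos

lemma dist_periodicExtension_chordLift {α : Type*} [PseudoMetricSpace α] (P : Fin n → α)
    (p : Fin n × Fin n) :
    dist (periodicExtension P (chordLift p).1) (periodicExtension P (chordLift p).2) =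
      dist (P p.1) (P p.2) := by
  rw [chordLift]
  split_ifs
  · simp only [periodicExtension_coe]
  · simp only [(periodicExtension_periodic P).sub_eq, periodicExtension_coe, dist_comm]

end PeriodicExtension

namespace ClockwiseConvexPos

variable {n : ℕ} {P : Fin n → EuclideanSpace ℝ (Fin 2)} {D : Finset ℝ}

lemma card_filter_dist_mem_le_of_upward_closed (hP : ClockwiseConvexPos P)
    (hD : ∀ c ∈ D, ∀ u v, c ≤ dist (P u) (P v) → dist (P u) (P v) ∈ D) :
    #{p : Fin n × Fin n | p.1 < p.2 ∧ dist (P p.1) (P p.2) ∈ D} ≤ (2 * #D - 1) * n := by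
  rcases n.eq_zero_or_pos with rfl | hn
  · simp
  have : NeZero n := ⟨hn.ne'⟩
  rw [← Finset.card_image_of_injective _ chordLift_injective]
  refine hP.isConvexCycle_periodicExtension.card_chords_le (fun c hc x y => hD c hc _ _)
    (Finset.forall_mem_image.2 fun p hp => ?_) (Finset.forall_mem_image.2 fun p hp => ?_)
  all_goals obtain ⟨hlt, hdist⟩ := (Finset.mem_filter.1 hp).2
  · exact (chordLift_bounds hlt).1
  · rw [dist_periodicExtension_chordLift]
    exact ⟨(chordLift_bounds hlt).2.1, (chordLift_bounds hlt).2.2, hdist⟩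

theorem card_filter_dist_mem_le (hP : ClockwiseConvexPos P)
    (hD : ∀ c ∈ D, ∀ u v, u ≠ v → c ≤ dist (P u) (P v) → dist (P u) (P v) ∈ D) :
    #{p : Fin n × Fin n | p.1 < p.2 ∧ dist (P p.1) (P p.2) ∈ D} ≤ (2 * #D - 1) * n := by
  -- Without negative elements, `D` is upward closed also for the degenerate chords `u = v`.
  set D₀ := D.filter (0 ≤ ·)
  have hD₀ : ∀ c ∈ D₀, ∀ u v, c ≤ dist (P u) (P v) → dist (P u) (P v) ∈ D₀ := by
    intro c hc u v hcuv
    obtain ⟨hcD, hc₀⟩ := Finset.mem_filter.1 hc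
    rcases eq_or_ne u v with rfl | huv
    · rw [dist_self] at hcuv ⊢
      exact hcuv.antisymm hc₀ ▸ hc
    · exact Finset.mem_filter.2 ⟨hD c hcD u v huv hcuv, dist_nonneg⟩
  calc #{p : Fin n × Fin n | p.1 < p.2 ∧ dist (P p.1) (P p.2) ∈ D}
    _ = #{p : Fin n × Fin n | p.1 < p.2 ∧ dist (P p.1) (P p.2) ∈ D₀} := by
      simp only [D₀, Finset.mem_filter, dist_nonneg, and_true]
    _ ≤ (2 * #D₀ - 1) * n := hP.card_filter_dist_mem_le_of_upward_closed hD₀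
    _ ≤ (2 * #D - 1) * n := by
      gcongr
      exact Finset.filter_subset _ _

end ClockwiseConvexPos

/-- Theorem 1.3: `m₁ + ⋯ + m_k ≤ (2k - 1) n`, where `m_i` is the number of unordered
pairs of vertices of the convex `n`-gon at distance `d i`, the `i`-th largest distance. -/
theorem stmt9 {n : ℕ} (P : Fin n → EuclideanSpace ℝ (Fin 2)) (hP : ClockwiseConvexPos P)
    (d : ℕ → ℝ) (N : ℕ) (hanti : StrictAntiOn d (Set.Icc 1 N))
    (himg : d '' Set.Icc 1 N = {r : ℝ | ∃ u v : Fin n, u ≠ v ∧ dist (P u) (P v) = r})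
    (k : ℕ) (hk1 : 1 ≤ k) (hk2 : k ≤ N) :
    ∑ i ∈ Finset.Icc 1 k,
      ((Finset.univ : Finset (Fin n × Fin n)).filter
        (fun p => p.1 < p.2 ∧ dist (P p.1) (P p.2) = d i)).card
      ≤ (2 * k - 1) * n := by
  have hinj : Set.InjOn d (Finset.Icc 1 k) :=
    hanti.injOn.mono (Finset.coe_Icc 1 k ▸ Set.Icc_subset_Icc_right hk2)
  have hD : ∀ c ∈ (Finset.Icc 1 k).image d, ∀ u v : Fin n, u ≠ v → c ≤ dist (P u) (P v) →
      dist (P u) (P v) ∈ (Finset.Icc 1 k).image d := fun c hc u v huv =>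
    mem_image_Icc_of_le hanti hk2 hc (himg.superset ⟨u, v, huv, rfl⟩)
  calc
    _ = ∑ c ∈ (Finset.Icc 1 k).image d,
          #{p : Fin n × Fin n | p.1 < p.2 ∧ dist (P p.1) (P p.2) = c} :=
      (Finset.sum_image hinj).symm
    _ = #{p : Fin n × Fin n | p.1 < p.2 ∧ dist (P p.1) (P p.2) ∈ (Finset.Icc 1 k).image d} := by
      simp only [← Finset.filter_filter, Finset.sum_card_fiberwise_eq_card_filter]
    _ ≤ (2 * #((Finset.Icc 1 k).image d) - 1) * n := hP.card_filter_dist_mem_le hD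
    _ = (2 * k - 1) * n := by
      rw [Finset.card_image_of_injOn hinj, Nat.card_Icc, Nat.add_sub_cancel]
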